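/- arXiv:2008.08411 — 2 statements merged into one kernel-verified Lean document; each statement's English description precedes it below -/
import Mathlib

section
/- (Chevalley's lemma) Let R be a complete local Noetherian ring with maximal ideal 𝔪, and let (aₙ)ₙ be a decreasing sequence of ideals of R with ⋂ₙ aₙ = 0. Then for every positive integer k there exists N such that a_N ⊆ 𝔪^k. -/
theorem chev_stab {R : Type*} [CommRing R] [IsNoetherianRing R] [IsLocalRing R]
    (a : ℕ → Ideal R) (hdec : Antitone a) (n : ℕ) :
    ∃ N, ∀ i, N ≤ i → a N ≤ a i ⊔ (IsLocalRing.maximalIdeal R) ^ n := by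
  have hA : IsArtinianRing (R ⧸ (IsLocalRing.maximalIdeal R) ^ n) := by
    rcases subsingleton_or_nontrivial (R ⧸ (IsLocalRing.maximalIdeal R) ^ n) with h | h
    · infer_instance
    have : IsLocalRing (R ⧸ (IsLocalRing.maximalIdeal R) ^ n) :=
      IsLocalRing.of_surjective' _ Ideal.Quotient.mk_surjective
    rw [isArtinianRing_iff_isNilpotent_maximalIdeal]
    refine ⟨n, ?_⟩
    have h1 : IsLocalRing.maximalIdeal (R ⧸ (IsLocalRing.maximalIdeal R) ^ n) ≤
        (IsLocalRing.maximalIdeal R).map (Ideal.Quotient.mk _) := by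
      intro x hx
      obtain ⟨y, rfl⟩ := Ideal.Quotient.mk_surjective x
      apply Ideal.mem_map_of_mem
      rw [IsLocalRing.mem_maximalIdeal, mem_nonunits_iff] at hx ⊢
      exact fun h => hx (h.map _)
    rw [Ideal.zero_eq_bot, eq_bot_iff]
    refine (Ideal.pow_right_mono h1 n).trans ?_
    rw [← Ideal.map_pow, Ideal.map_quotient_self]
  obtain ⟨N, hN⟩ := IsArtinian.monotone_stabilizes (R := R ⧸ (IsLocalRing.maximalIdeal R) ^ n)
    (M := R ⧸ (IsLocalRing.maximalIdeal R) ^ n)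
    ⟨fun i => OrderDual.toDual ((a i).map (Ideal.Quotient.mk _)),
      fun i j h => Ideal.map_mono (hdec h)⟩
  refine ⟨N, fun i hi x hx => ?_⟩
  have h2 : (a N).map (Ideal.Quotient.mk ((IsLocalRing.maximalIdeal R) ^ n))
    = (a i).map (Ideal.Quotient.mk _) := hN i hi
  have h3 := Ideal.mem_map_of_mem (Ideal.Quotient.mk ((IsLocalRing.maximalIdeal R) ^ n)) hx
  rw [h2, ← Ideal.mem_comap, Ideal.comap_map_of_surjective' _ Ideal.Quotient.mk_surjective,
    Ideal.mk_ker] at h3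
  exact h3

theorem chev_closed {R : Type*} [CommRing R] [IsNoetherianRing R] [IsLocalRing R]
    (I : Ideal R) (x : R) (hx : ∀ n, x ∈ I ⊔ (IsLocalRing.maximalIdeal R) ^ n) : x ∈ I := by
  have h := Ideal.iInf_pow_smul_eq_bot_of_isLocalRing (M := R ⧸ I) (IsLocalRing.maximalIdeal R)
    (Ideal.IsPrime.ne_top inferInstance)
  rw [← Ideal.Quotient.eq_zero_iff_mem, ← Submodule.mem_bot R, ← h, Submodule.mem_iInf]
  intro n
  obtain ⟨y, hy, z, hz, rfl⟩ := Submodule.mem_sup.1 (hx n)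
  rw [map_add, Ideal.Quotient.eq_zero_iff_mem.2 hy, zero_add]
  have : Ideal.Quotient.mk I z = z • (1 : R ⧸ I) := by
    rw [Algebra.smul_def, mul_one]; rfl
  rw [this]
  exact Submodule.smul_mem_smul hz trivial

theorem stmt_1 {R : Type*} [CommRing R] [IsNoetherianRing R] [IsLocalRing R]
    [IsAdicComplete (IsLocalRing.maximalIdeal R) R]
    (a : ℕ → Ideal R) (hdec : Antitone a) (hinf : ⨅ n, a n = ⊥) :
    ∀ k : ℕ, 0 < k → ∃ N : ℕ, a N ≤ (IsLocalRing.maximalIdeal R) ^ k := by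
  intro k _
  by_contra! hcon
  choose N hN using chev_stab a hdec
  -- strengthen the index so that it dominates `n`
  let M : ℕ → ℕ := fun n => max n (N n)
  have step : ∀ n, ∀ x ∈ a (M n), ∃ y ∈ a (M (n + 1)),
      x - y ∈ (IsLocalRing.maximalIdeal R) ^ n := by
    intro n x hx
    have h1 : x ∈ a (N n) := hdec (le_max_right _ _) hx
    have h2 := hN n (max (N n) (M (n + 1))) (le_max_left _ _) h1
    obtain ⟨y, hy, z, hz, rfl⟩ := Submodule.mem_sup.1 h2
    exact ⟨y, hdec (le_max_right _ _) hy, by simpa using hz⟩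
  obtain ⟨x0, hx0, hx0'⟩ := Set.not_subset.1 (hcon (M k))
  choose! g hg hg' using step
  let f : ℕ → R := fun n => Nat.rec x0 (fun n y => g (k + n) y) n
  have hf : ∀ n, f n ∈ a (M (k + n)) := by
    intro n
    induction n with
    | zero => exact hx0
    | succ n ih => exact hg _ _ ih
  have hf' : ∀ n, f n - f (n + 1) ∈ (IsLocalRing.maximalIdeal R) ^ (k + n) :=
    fun n => hg' _ _ (hf n)
  have hd : ∀ m j, f m - f (m + j) ∈ (IsLocalRing.maximalIdeal R) ^ (k + m) := by
    intro m j
    induction j with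
    | zero => simp
    | succ j ih =>
      have := Ideal.add_mem _ ih (Ideal.pow_le_pow_right (by omega) (hf' (m + j)))
      rwa [sub_add_sub_cancel] at this
  obtain ⟨x, hx⟩ := IsPrecomplete.prec (I := IsLocalRing.maximalIdeal R) (M := R)
    inferInstance (f := f) (by
      intro m n hmn
      obtain ⟨j, rfl⟩ := Nat.exists_eq_add_of_le hmn
      rw [SModEq.sub_mem, smul_eq_mul, Ideal.mul_top]
      exact Ideal.pow_le_pow_right (by omega) (hd m j))
  have hx' : ∀ n, f n - x ∈ (IsLocalRing.maximalIdeal R) ^ n := by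
    intro n
    have := hx n
    rwa [SModEq.sub_mem, smul_eq_mul, Ideal.mul_top] at this
  have hxz : x = 0 := by
    rw [← Ideal.mem_bot, ← hinf, Submodule.mem_iInf]
    intro i
    apply chev_closed
    intro n
    have h1 : f (n + i) ∈ a i :=
      hdec (le_trans (by omega) (le_max_left (k + (n + i)) _)) (hf (n + i))
    have h2 := Ideal.pow_le_pow_right (show n ≤ n + i by omega) (hx' (n + i))
    rw [show x = f (n + i) - (f (n + i) - x) by ring]
    exact Ideal.sub_mem _ (Ideal.mem_sup_left h1) (Ideal.mem_sup_right h2)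
  apply hx0'
  have h1 := hd 0 k
  have h2 := hx' k
  rw [hxz, sub_zero] at h2
  rw [zero_add, add_zero] at h1
  have := Ideal.add_mem _ h1 h2
  rwa [sub_add_cancel] at this
end

section
/- Let R be a finite commutative local ring with maximal ideal 𝔪 and residue field k = R/𝔪 of cardinality at least 4. Then the kernel N₀ of the natural surjection SL₂(R) → PSL₂(k) contains every proper normal subgroup of SL₂(R). In particular, N₀ is the unique maximal proper normal subgroup of SL₂(R), and SL₂(R)/N₀ ≅ PSL₂(k) is non-solvable. -/
open Matrix in
lemma aux_exists_sq {F : Type*} [Field F] (hF : 4 ≤ Nat.card F) :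
    ∃ a : F, a ≠ 0 ∧ a ^ 2 ≠ 1 := by
  have : Finite F := (Nat.card_pos_iff.1 (by omega)).2
  obtain ⟨x, hx⟩ : IsCyclic Fˣ := by infer_instance
  refine ⟨x, Units.ne_zero x, fun h ↦ ?_⟩
  grw [Nat.card_eq_card_units_add_one F, ← orderOf_eq_card_of_forall_mem_zpowers hx,
    orderOf_le_of_pow_eq_one zero_lt_two (Units.ext <| by simpa using h)] at hF
  omega

/-- upper elementary matrix -/
def auxU {R : Type*} [CommRing R] (x : R) : Matrix.SpecialLinearGroup (Fin 2) R :=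
  ⟨!![1, x; 0, 1], by simp [Matrix.det_fin_two]⟩

/-- lower elementary matrix -/
def auxL {R : Type*} [CommRing R] (x : R) : Matrix.SpecialLinearGroup (Fin 2) R :=
  ⟨!![1, 0; x, 1], by simp [Matrix.det_fin_two]⟩

/-- Weyl element with parameter `c`, `c * d = 1`. -/
def auxW {R : Type*} [CommRing R] (c d : R) (h : d * c = 1) (t : R) :
    Matrix.SpecialLinearGroup (Fin 2) R :=
  ⟨!![0, -d; c, t], by simp [Matrix.det_fin_two, h]⟩

/-- upper triangular element. -/
def auxB {R : Type*} [CommRing R] (s r : R) (h : s * r = 1) (t : R) :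
    Matrix.SpecialLinearGroup (Fin 2) R :=
  ⟨!![s, t; 0, r], by simp [Matrix.det_fin_two, h]⟩

lemma auxU_coe {R : Type*} [CommRing R] (x : R) :
    (auxU x : Matrix (Fin 2) (Fin 2) R) = !![1, x; 0, 1] := rfl

lemma auxL_coe {R : Type*} [CommRing R] (x : R) :
    (auxL x : Matrix (Fin 2) (Fin 2) R) = !![1, 0; x, 1] := rfl

lemma auxW_coe {R : Type*} [CommRing R] (c d : R) (h : d * c = 1) (t : R) :
    (auxW c d h t : Matrix (Fin 2) (Fin 2) R) = !![0, -d; c, t] := rfl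

lemma auxB_coe {R : Type*} [CommRing R] (s r : R) (h : s * r = 1) (t : R) :
    (auxB s r h t : Matrix (Fin 2) (Fin 2) R) = !![s, t; 0, r] := rfl

lemma auxU_inv {R : Type*} [CommRing R] (x : R) : (auxU x)⁻¹ = auxU (-x) := by
  ext i j; fin_cases i <;> fin_cases j <;>
    simp [auxU_coe, Matrix.SpecialLinearGroup.coe_inv, Matrix.adjugate_fin_two]

lemma aux_eq_top {R : Type*} [CommRing R] [IsLocalRing R]
    (N : Subgroup (Matrix.SpecialLinearGroup (Fin 2) R))
    (hU : ∀ x, auxU x ∈ N) (hL : ∀ x, auxL x ∈ N) : N = ⊤ := by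
  have key : ∀ g : Matrix.SpecialLinearGroup (Fin 2) R, IsUnit (g 1 0) → g ∈ N := by
    intro g hg
    obtain ⟨e, he⟩ := hg.exists_left_inv
    have hdet : g 0 0 * g 1 1 - g 0 1 * g 1 0 = 1 := by
      rw [← Matrix.det_fin_two]; exact g.2
    have : g = auxU ((g 0 0 - 1) * e) * auxL (g 1 0) * auxU ((g 1 1 - 1) * e) := by
      ext i j; fin_cases i <;> fin_cases j <;>
        simp [auxU_coe, auxL_coe, Matrix.mul_apply, Fin.sum_univ_two] <;> grind
    rw [this]
    exact N.mul_mem (N.mul_mem (hU _) (hL _)) (hU _)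
  rw [eq_top_iff]
  intro g _
  by_cases h : IsUnit (g 1 0)
  · exact key g h
  · have hdet : g 0 0 * g 1 1 - g 0 1 * g 1 0 = 1 := by
      rw [← Matrix.det_fin_two]; exact g.2
    have h0 : IsUnit (g 0 0) := by
      by_contra h0
      have h1 : g 0 0 ∈ IsLocalRing.maximalIdeal R := h0
      have h2 : g 1 0 ∈ IsLocalRing.maximalIdeal R := h
      have h3 : (1 : R) ∈ IsLocalRing.maximalIdeal R := by
        rw [← hdet]
        exact sub_mem (Ideal.mul_mem_right _ _ h1) (Ideal.mul_mem_left _ _ h2)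
      exact h3 isUnit_one
    have h2 : IsUnit ((auxL 1 * g : Matrix.SpecialLinearGroup (Fin 2) R) 1 0) := by
      by_contra hc
      have hc' : (auxL 1 * g : Matrix.SpecialLinearGroup (Fin 2) R) 1 0 ∈
        IsLocalRing.maximalIdeal R := hc
      have h4 : g 1 0 ∈ IsLocalRing.maximalIdeal R := h
      have h5 := sub_mem hc' h4
      simp [auxL_coe, Matrix.mul_apply, Fin.sum_univ_two] at h5
      exact h5 h0
    have := N.mul_mem (N.inv_mem (hL 1)) (key _ h2)
    simpa using this

lemma aux_normalize {R : Type*} [CommRing R]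
    (N : Subgroup (Matrix.SpecialLinearGroup (Fin 2) R)) (hN : N.Normal)
    (g : Matrix.SpecialLinearGroup (Fin 2) R) (hg : g ∈ N) (e : R) (he : e * g 1 0 = 1) :
    ∃ t, auxW (g 1 0) e he t ∈ N := by
  refine ⟨g 0 0 + g 1 1, ?_⟩
  have := hN.conj_mem g hg (auxU (-(g 0 0 * e)))
  rw [auxU_inv] at this
  have hdet : g 0 0 * g 1 1 - g 0 1 * g 1 0 = 1 := by
    rw [← Matrix.det_fin_two]; exact g.2
  convert this using 1
  ext i j; fin_cases i <;> fin_cases j <;>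
    simp [auxU_coe, auxW_coe, Matrix.mul_apply, Fin.sum_univ_two, Matrix.vecMul,
      dotProduct] <;> grind

lemma aux_main {R : Type*} [CommRing R] [IsLocalRing R]
    (N : Subgroup (Matrix.SpecialLinearGroup (Fin 2) R)) (hN : N.Normal)
    (g₁ g₂ : Matrix.SpecialLinearGroup (Fin 2) R) (h₁ : g₁ ∈ N) (h₂ : g₂ ∈ N)
    (u₁ : IsUnit (g₁ 1 0)) (u₂ : IsUnit (g₂ 1 0))
    (hu : IsUnit (g₁ 1 0 ^ 2 - g₂ 1 0 ^ 2)) : N = ⊤ := by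
  obtain ⟨e₁, he₁⟩ := u₁.exists_left_inv
  obtain ⟨e₂, he₂⟩ := u₂.exists_left_inv
  obtain ⟨t₁, ht₁⟩ := aux_normalize N hN g₁ h₁ e₁ he₁
  obtain ⟨t₂, ht₂⟩ := aux_normalize N hN g₂ h₂ e₂ he₂
  generalize g₁ 1 0 = c₁ at *
  generalize g₂ 1 0 = c₂ at *
  have hs : (c₂ * e₁) * (c₁ * e₂) = 1 := by grind
  obtain ⟨t, hB⟩ : ∃ t, auxB (c₂ * e₁) (c₁ * e₂) hs t ∈ N := by
    refine ⟨-t₁ * e₂ + t₂ * e₁, ?_⟩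
    convert N.mul_mem (N.inv_mem ht₁) ht₂ using 1
    ext i j; fin_cases i <;> fin_cases j <;>
      simp [auxB_coe, auxW_coe, Matrix.SpecialLinearGroup.coe_inv, Matrix.adjugate_fin_two,
        Matrix.mul_apply, Fin.sum_univ_two] <;> grind
  obtain ⟨v, hv⟩ := hu.exists_left_inv
  have hU : ∀ x, auxU x ∈ N := by
    intro x
    have h := N.mul_mem (hN.conj_mem _ hB (auxU (x * v * c₁ ^ 2))) (N.inv_mem hB)
    rw [auxU_inv] at h
    convert h using 1
    ext i j; fin_cases i <;> fin_cases j <;>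
      simp [auxB_coe, auxU_coe, Matrix.SpecialLinearGroup.coe_inv, Matrix.adjugate_fin_two,
        Matrix.mul_apply, Fin.sum_univ_two] <;> grind
  refine aux_eq_top N hU fun x => ?_
  have h := hN.conj_mem _ (hU (-x)) (auxW 1 1 (one_mul 1) 0)
  convert h using 1
  ext i j; fin_cases i <;> fin_cases j <;>
    simp [auxL_coe, auxW_coe, auxU_coe, Matrix.SpecialLinearGroup.coe_inv, Matrix.adjugate_fin_two,
      Matrix.mul_apply, Fin.sum_univ_two]

theorem stmt_4 {R : Type*} [CommRing R] [IsLocalRing R] [Finite R]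
    (hk : 4 ≤ Nat.card (IsLocalRing.ResidueField R)) :
    (∀ N : Subgroup (Matrix.SpecialLinearGroup (Fin 2) R), N.Normal → N ≠ ⊤ →
      N ≤ MonoidHom.ker
        ((QuotientGroup.mk' (Subgroup.center
            (Matrix.SpecialLinearGroup (Fin 2) (IsLocalRing.ResidueField R)))).comp
          (Matrix.SpecialLinearGroup.map (IsLocalRing.residue R)))) ∧
    ¬ IsSolvable (Matrix.SpecialLinearGroup (Fin 2) (IsLocalRing.ResidueField R) ⧸
        Subgroup.center (Matrix.SpecialLinearGroup (Fin 2) (IsLocalRing.ResidueField R))) := by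
  obtain ⟨a, ha, ha2⟩ := aux_exists_sq hk
  have hsimple : IsSimpleGroup (Matrix.SpecialLinearGroup (Fin 2) (IsLocalRing.ResidueField R) ⧸
        Subgroup.center (Matrix.SpecialLinearGroup (Fin 2) (IsLocalRing.ResidueField R))) :=
    Matrix.ProjectiveSpecialLinearGroup.rank_two_simple hk
  refine ⟨fun N hN hNt => ?_, fun hsol => ?_⟩
  · by_contra hle
    apply hNt
    set f := (Matrix.SpecialLinearGroup.map (n := Fin 2) (IsLocalRing.residue R)) with hf
    set q := QuotientGroup.mk' (Subgroup.center
            (Matrix.SpecialLinearGroup (Fin 2) (IsLocalRing.ResidueField R))) with hq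
    have hU : ∀ y, ∃ x, f (auxU x) = auxU y := by
      intro y
      obtain ⟨x, rfl⟩ := IsLocalRing.residue_surjective y
      refine ⟨x, ?_⟩
      ext i j; fin_cases i <;> fin_cases j <;> simp [hf, auxU_coe]
    have hL : ∀ y, ∃ x, f (auxL x) = auxL y := by
      intro y
      obtain ⟨x, rfl⟩ := IsLocalRing.residue_surjective y
      refine ⟨x, ?_⟩
      ext i j; fin_cases i <;> fin_cases j <;> simp [hf, auxL_coe]
    have hfs : Function.Surjective f := by
      rw [← MonoidHom.range_eq_top]
      exact aux_eq_top _ (fun y => (hU y).imp' _ fun _ h => h)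
        (fun y => (hL y).imp' _ fun _ h => h)
    have hsurj : Function.Surjective (q.comp f) :=
      (QuotientGroup.mk'_surjective _).comp hfs
    have hmap : N.map (q.comp f) = ⊤ := by
      rcases (hN.map _ hsurj).eq_bot_or_eq_top with h | h
      · exact absurd ((Subgroup.map_eq_bot_iff _).1 h) hle
      · exact h
    have lift : ∀ h : Matrix.SpecialLinearGroup (Fin 2) (IsLocalRing.ResidueField R),
        ∃ g ∈ N, (IsLocalRing.residue R (g 1 0)) ^ 2 = (h 1 0) ^ 2 := by
      intro h
      have hm : q h ∈ N.map (q.comp f) := hmap ▸ Subgroup.mem_top _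
      obtain ⟨g, hg, hgh⟩ := hm
      refine ⟨g, hg, ?_⟩
      have hz : h⁻¹ * f g ∈ Subgroup.center _ := QuotientGroup.eq.1 hgh.symm
      obtain ⟨r, hr, hrs⟩ := Matrix.SpecialLinearGroup.mem_center_iff.1 hz
      have hfg : f g = h * (h⁻¹ * f g) := by group
      have h10 : IsLocalRing.residue R (g 1 0) = h 1 0 * r := by
        have : (f g) 1 0 = (h * (h⁻¹ * f g)) 1 0 := by rw [← hfg]
        rw [Matrix.SpecialLinearGroup.coe_mul, ← hrs] at this
        simpa [hf, Matrix.mul_apply, Fin.sum_univ_two] using this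
      have hr' : r ^ 2 = 1 := by simpa using hr
      rw [h10, mul_pow, hr', mul_one]
    obtain ⟨g₁, hg₁, e₁⟩ := lift (auxW 1 1 (one_mul 1) 0)
    obtain ⟨g₂, hg₂, e₂⟩ := lift (auxW a a⁻¹ (inv_mul_cancel₀ ha) 0)
    simp [auxW_coe] at e₁ e₂
    refine aux_main N hN g₁ g₂ hg₁ hg₂ ?_ ?_ ?_ <;>
      rw [← IsLocalRing.residue_ne_zero_iff_isUnit]
    · intro h; simp [h] at e₁
    · intro h; rw [h] at e₂; exact ha (by grind)
    · rw [map_sub, map_pow, map_pow]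
      intro h
      apply ha2
      grind
  · have h1 := SL2Simple.PSL_commutator_eq_top ⟨a, ha, ha2⟩
    have hsol' : Group.IsSolvable
      (Matrix.SpecialLinearGroup (Fin 2) (IsLocalRing.ResidueField R) ⧸
        Subgroup.center (Matrix.SpecialLinearGroup (Fin 2) (IsLocalRing.ResidueField R))) := hsol
    have h2 := Group.IsSolvable.commutator_lt_top_of_nontrivial
      (Matrix.SpecialLinearGroup (Fin 2) (IsLocalRing.ResidueField R) ⧸
        Subgroup.center (Matrix.SpecialLinearGroup (Fin 2) (IsLocalRing.ResidueField R)))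
    exact h2.ne h1
end
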